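/- arXiv:2404.09746 — 4 statements merged into one kernel-verified Lean document; each statement's English description precedes it below -/
import Mathlib

section
/- Strong duality between the minimum gradient norm and the recession function (Euclidean case of Corollary 3.3): inf_{x ∈ ℝⁿ} ‖∇f(x)‖ = sup_{u : ‖u‖ ≤ 1} (−f^∞(u)), where terms with f^∞(u) = +∞ contribute −∞ to the supremum (the supremum is a finite nonnegative real, since u = 0 gives the value 0). -/
open Filter
open scoped RealInnerProductSpace

/-- The recession function (asymptotic slope) of `f`:
`f^∞(u) = sup_{s>0} (f(su) - f(0))/s`, valued in `EReal`. -/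
noncomputable def recessionFn {n : ℕ} (f : EuclideanSpace ℝ (Fin n) → ℝ)
    (u : EuclideanSpace ℝ (Fin n)) : EReal :=
  ⨆ (s : ℝ) (_ : 0 < s), (((f (s • u) - f 0) / s : ℝ) : EReal)

theorem srd_grad_ineq {n : ℕ} (f : EuclideanSpace ℝ (Fin n) → ℝ)
    (hconv : ConvexOn ℝ Set.univ f) (hf : ContDiff ℝ 1 f) (x y : EuclideanSpace ℝ (Fin n)) :
    f x + ⟪gradient f x, y - x⟫ ≤ f y := by
  have hd : DifferentiableAt ℝ f x := (hf.differentiable (by norm_num)) x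
  have hg : HasFDerivAt f (fderiv ℝ f x) x := hd.hasFDerivAt
  have hline : HasDerivAt (fun t : ℝ => x + t • (y - x)) (y - x) 0 := by
    simpa using ((hasDerivAt_id (0 : ℝ)).smul_const (y - x)).const_add x
  have hc : HasDerivAt (fun t : ℝ => f (x + t • (y - x))) (fderiv ℝ f x (y - x)) 0 := by
    have hg' : HasFDerivAt f (fderiv ℝ f x) (x + (0 : ℝ) • (y - x)) := by simpa using hg
    exact hg'.comp_hasDerivAt (0 : ℝ) hline
  have hcv : ConvexOn ℝ Set.univ (fun t : ℝ => f (x + t • (y - x))) := by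
    have := hconv.comp_affineMap (AffineMap.lineMap x y : ℝ →ᵃ[ℝ] EuclideanSpace ℝ (Fin n))
    have e : (fun t : ℝ => f (x + t • (y - x))) = f ∘ (AffineMap.lineMap x y) := by
      funext t
      simp [AffineMap.lineMap_apply, add_comm]
    rw [e]
    exact this
  have h := hcv.le_slope_of_hasDerivAt (Set.mem_univ 0) (Set.mem_univ 1) one_pos hc
  rw [slope_def_field] at h
  have e : ⟪gradient f x, y - x⟫ = fderiv ℝ f x (y - x) := by
    simp [gradient]
  rw [e, map_sub]
  simp at h
  linarith

theorem srd_ball {n : ℕ} (f : EuclideanSpace ℝ (Fin n) → ℝ)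
    (hconv : ConvexOn ℝ Set.univ f) (hf : ContDiff ℝ 1 f) (t : ℝ) (ht : 0 < t) :
    ∃ x, ‖x‖ ≤ t ∧ f x + t * ‖gradient f x‖ ≤ f 0 := by
  obtain ⟨x, hx, hmin⟩ := (isCompact_closedBall (0 : EuclideanSpace ℝ (Fin n)) t).exists_isMinOn
    ⟨0, by simp [ht.le]⟩ hf.continuous.continuousOn
  refine ⟨x, by simpa using hx, ?_⟩
  have h0 := srd_grad_ineq f hconv hf x 0
  by_cases hg : gradient f x = 0
  · simp [hg] at h0 ⊢
    exact h0
  have hgp : 0 < ‖gradient f x‖ := norm_pos_iff.2 hg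
  set y : EuclideanSpace ℝ (Fin n) := (-(t / ‖gradient f x‖)) • gradient f x with hy
  have hyb : y ∈ Metric.closedBall (0 : EuclideanSpace ℝ (Fin n)) t := by
    rw [mem_closedBall_zero_iff, hy, norm_smul, norm_neg, Real.norm_of_nonneg (by positivity)]
    field_simp
    exact le_refl _
  have hd : DifferentiableAt ℝ f x := (hf.differentiable (by norm_num)) x
  have hv := hmin.localize.hasFDerivWithinAt_nonneg hd.hasFDerivAt.hasFDerivWithinAt
    (sub_mem_posTangentConeAt_of_segment_subset
      ((convex_closedBall (0 : EuclideanSpace ℝ (Fin n)) t).segment_subset hx hyb))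
  have e : ⟪gradient f x, y - x⟫ = fderiv ℝ f x (y - x) := by
    simp [gradient]
  rw [← e, inner_sub_right, hy, inner_smul_right, real_inner_self_eq_norm_sq] at hv
  have e2 : -(t / ‖gradient f x‖) * ‖gradient f x‖ ^ 2 = -(t * ‖gradient f x‖) := by
    field_simp
  rw [e2] at hv
  rw [inner_sub_right, inner_zero_right] at h0
  linarith

theorem srd_dir {n : ℕ} (f : EuclideanSpace ℝ (Fin n) → ℝ)
    (hconv : ConvexOn ℝ Set.univ f) (hf : ContDiff ℝ 1 f) (m : ℝ)
    (hm : ∀ x, m ≤ ‖gradient f x‖) :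
    ∃ u : EuclideanSpace ℝ (Fin n), ‖u‖ ≤ 1 ∧ ∀ s : ℝ, 0 < s → f (s • u) ≤ f 0 - m * s := by
  have hk : ∀ k : ℕ, ∃ u : EuclideanSpace ℝ (Fin n), u ∈ Metric.closedBall 0 1 ∧
      ∀ s : ℝ, 0 < s → s ≤ k + 1 → f (s • u) ≤ f 0 - m * s := by
    intro k
    have ht : (0 : ℝ) < k + 1 := by positivity
    obtain ⟨x, hx, hfx⟩ := srd_ball f hconv hf (k + 1) ht
    refine ⟨((k : ℝ) + 1)⁻¹ • x, ?_, ?_⟩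
    · rw [mem_closedBall_zero_iff, norm_smul, Real.norm_of_nonneg (by positivity),
        inv_mul_le_iff₀ ht]
      simpa using hx
    · intro s hs hsk
      have hr0 : 0 ≤ s / (k + 1) := by positivity
      have hr1 : s / (k + 1) ≤ 1 := (div_le_one ht).2 hsk
      have hc := hconv.2 (Set.mem_univ 0) (Set.mem_univ x) (sub_nonneg.2 hr1) hr0 (by ring)
      rw [smul_zero, zero_add, smul_eq_mul, smul_eq_mul] at hc
      rw [smul_smul, ← div_eq_mul_inv]
      have h1 : f x - f 0 ≤ - ((k + 1) * m) := by
        have := mul_le_mul_of_nonneg_left (hm x) ht.le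
        linarith
      have h2 := mul_le_mul_of_nonneg_left h1 hr0
      have h3 : s / ((k : ℝ) + 1) * (-((k + 1) * m)) = - (m * s) := by
        field_simp
      rw [h3] at h2
      linarith
  choose u hu hus using hk
  obtain ⟨a, ha, φ, hφ, hlim⟩ :=
    (isCompact_closedBall (0 : EuclideanSpace ℝ (Fin n)) 1).tendsto_subseq hu
  refine ⟨a, by simpa using ha, fun s hs => ?_⟩
  have hl : Tendsto (fun k => f (s • (u ∘ φ) k)) atTop (nhds (f (s • a))) :=
    (hf.continuous.tendsto _).comp (hlim.const_smul s)
  refine le_of_tendsto hl ?_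
  filter_upwards [eventually_ge_atTop ⌈s⌉₊] with k hk
  refine hus (φ k) s hs ?_
  have h1 : s ≤ (⌈s⌉₊ : ℝ) := Nat.le_ceil s
  have h2 : (⌈s⌉₊ : ℝ) ≤ (φ k : ℝ) := by exact_mod_cast hk.trans (hφ.id_le k)
  linarith

theorem srd_weak {n : ℕ} (f : EuclideanSpace ℝ (Fin n) → ℝ)
    (hconv : ConvexOn ℝ Set.univ f) (hf : ContDiff ℝ 1 f) (x u : EuclideanSpace ℝ (Fin n))
    (hu : ‖u‖ ≤ 1) : ((-‖gradient f x‖ : ℝ) : EReal) ≤ recessionFn f u := by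
  set C : ℝ := f x - f 0 - ⟪gradient f x, x⟫ with hC
  have hl : Tendsto (fun s : ℝ => -‖gradient f x‖ + C / s) atTop (nhds (-‖gradient f x‖)) := by
    simpa using (tendsto_const_nhds (x := -‖gradient f x‖)).add
      (tendsto_const_nhds (x := C) |>.div_atTop tendsto_id)
  have hl' := (continuous_coe_real_ereal.tendsto (-‖gradient f x‖)).comp hl
  refine le_of_tendsto hl' ?_
  filter_upwards [eventually_gt_atTop (0 : ℝ)] with s hs
  refine le_trans ?_ (le_iSup₂ (f := fun (s : ℝ) (_ : 0 < s) =>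
    (((f (s • u) - f 0) / s : ℝ) : EReal)) s hs)
  simp only [Function.comp]
  rw [EReal.coe_le_coe_iff, le_div_iff₀ hs, add_mul, div_mul_cancel₀ _ hs.ne']
  have h := srd_grad_ineq f hconv hf x (s • u)
  rw [inner_sub_right, inner_smul_right] at h
  have h1 : -‖gradient f x‖ ≤ ⟪gradient f x, u⟫ := by
    have h2 := neg_le_of_abs_le (abs_real_inner_le_norm (gradient f x) u)
    have h3 := mul_le_mul_of_nonneg_left hu (norm_nonneg (gradient f x))
    linarith
  have h4 := mul_le_mul_of_nonneg_left h1 hs.le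
  linarith

/-- Strong duality between the minimum gradient norm and the recession function
(Euclidean case of Corollary 3.3):
`inf_x ‖∇f(x)‖ = sup_{‖u‖ ≤ 1} (-f^∞(u))` (as extended reals; terms with
`f^∞(u) = +∞` contribute `-∞` to the supremum). -/
theorem strong_duality_gradient_recession {n : ℕ} (hn : 1 ≤ n)
    (f : EuclideanSpace ℝ (Fin n) → ℝ)
    (hconv : ConvexOn ℝ Set.univ f) (hf : ContDiff ℝ 1 f) :
    ((⨅ x, ‖gradient f x‖ : ℝ) : EReal) =
      ⨆ (u : EuclideanSpace ℝ (Fin n)) (_ : ‖u‖ ≤ 1), -(recessionFn f u) := by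
  apply le_antisymm
  · obtain ⟨u, hu, h⟩ := srd_dir f hconv hf (⨅ x, ‖gradient f x‖)
      (fun x => ciInf_le ⟨0, by rintro _ ⟨y, rfl⟩; exact norm_nonneg _⟩ x)
    refine le_trans ?_ (le_iSup₂ (f := fun (u : EuclideanSpace ℝ (Fin n)) (_ : ‖u‖ ≤ 1) =>
      -(recessionFn f u)) u hu)
    rw [EReal.le_neg]
    refine iSup₂_le fun s hs => ?_
    rw [← EReal.coe_neg, EReal.coe_le_coe_iff, div_le_iff₀ hs]
    linarith [h s hs]
  · refine iSup₂_le fun u hu => ?_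
    rw [EReal.neg_le]
    have hw := srd_weak f hconv hf
    rcases eq_or_ne (recessionFn f u) ⊤ with htop | htop
    · rw [htop]; exact le_top
    have hbot : recessionFn f u ≠ ⊥ := fun hb => by
      have := hw 0 u hu
      rw [hb, le_bot_iff] at this
      exact EReal.coe_ne_bot _ this
    lift recessionFn f u to ℝ using ⟨htop, hbot⟩ with r hr
    rw [← EReal.coe_neg, EReal.coe_le_coe_iff, neg_le]
    refine le_ciInf fun x => ?_
    have := hw x u hu
    rw [← hr, EReal.coe_le_coe_iff] at this
    linarith
end

section
/- Convergence of the gradient norm along gradient descent (Euclidean case of Theorem 3.7(1)): suppose κ* := inf_{y ∈ ℝⁿ} ‖∇f(y)‖ > 0 and let (x_i) be the gradient-descent sequence with step size 1/L from any initial point x₀. Then ‖∇f(x_i)‖ converges to κ* as i → ∞. -/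
open Filter
open scoped RealInnerProductSpace

section aux
variable {E : Type*} [NormedAddCommGroup E] [InnerProductSpace ℝ E] [CompleteSpace E]

lemma aux_line (f : E → ℝ) (hdiff : Differentiable ℝ f) (y v : E) (t : ℝ) :
    HasDerivAt (fun t : ℝ => f (y + t • v)) ⟪gradient f (y + t • v), v⟫ t := by
  have h1 : HasFDerivAt f (InnerProductSpace.toDual ℝ E (gradient f (y + t • v))) (y + t • v) :=
    (hdiff _).hasGradientAt.hasFDerivAt
  have h2 : HasDerivAt (fun t : ℝ => y + t • v) v t := by
    simpa using ((hasDerivAt_id t).smul_const v).const_add y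
  exact h1.comp_hasDerivAt t h2

lemma aux_descent (f : E → ℝ) (L : ℝ) (hdiff : Differentiable ℝ f)
    (hs : ∀ y z : E, ‖gradient f y - gradient f z‖ ≤ L * ‖y - z‖) (y v : E) :
    f (y + v) ≤ f y + ⟪gradient f y, v⟫ + L / 2 * ‖v‖ ^ 2 := by
  have hd : ∀ t : ℝ, HasDerivAt
      (fun t : ℝ => f (y + t • v) - (t * ⟪gradient f y, v⟫ + t ^ 2 * (L / 2 * ‖v‖ ^ 2)))
      (⟪gradient f (y + t • v), v⟫ - (⟪gradient f y, v⟫ + 2 * t * (L / 2 * ‖v‖ ^ 2))) t := by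
    intro t
    have h1 := (hasDerivAt_id t).mul_const ⟪gradient f y, v⟫
    have h2 := ((hasDerivAt_id t).pow 2).mul_const (L / 2 * ‖v‖ ^ 2)
    have h3 := (aux_line f hdiff y v t).sub (h1.add h2)
    refine h3.congr_deriv ?_
    simp
  have ha := antitoneOn_of_deriv_nonpos (convex_Icc (0:ℝ) 1)
    (fun t _ => (hd t).continuousAt.continuousWithinAt)
    (fun t _ => (hd t).differentiableAt.differentiableWithinAt) (by
      intro t ht
      rw [interior_Icc] at ht
      rw [(hd t).deriv]
      have h1 := real_inner_le_norm (gradient f (y + t • v) - gradient f y) v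
      have h2 := hs (y + t • v) y
      rw [add_sub_cancel_left, norm_smul, Real.norm_of_nonneg ht.1.le] at h2
      rw [inner_sub_left] at h1
      nlinarith [mul_le_mul_of_nonneg_right h2 (norm_nonneg v)])
  have := ha (Set.left_mem_Icc.2 zero_le_one) (Set.right_mem_Icc.2 zero_le_one) zero_le_one
  simp at this ⊢
  linarith

lemma aux_convex (f : E → ℝ) (hconv : ConvexOn ℝ Set.univ f) (hdiff : Differentiable ℝ f)
    (y v : E) : f y + ⟪gradient f y, v⟫ ≤ f (y + v) := by
  have hc : ConvexOn ℝ Set.univ (fun t : ℝ => f (y + t • v)) := by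
    refine ⟨convex_univ, fun a _ b _ p q hp hq hpq => ?_⟩
    have := hconv.2 (Set.mem_univ (y + a • v)) (Set.mem_univ (y + b • v)) hp hq hpq
    convert this using 2
    have : y = p • y + q • y := by rw [← add_smul, hpq, one_smul]
    nth_rewrite 1 [this]
    simp only [smul_eq_mul]
    module
  have h := hc.le_slope_of_hasDerivAt (Set.mem_univ 0) (Set.mem_univ 1) zero_lt_one
    (aux_line f hdiff y v 0)
  simp [slope_def_field] at h ⊢
  linarith

lemma aux_half (f : E → ℝ) (L : ℝ) (hL : 0 < L) (hconv : ConvexOn ℝ Set.univ f)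
    (hdiff : Differentiable ℝ f)
    (hs : ∀ y z : E, ‖gradient f y - gradient f z‖ ≤ L * ‖y - z‖) (x y : E) :
    f x + ⟪gradient f x, y - x⟫ + L / 2 * ‖(1 / L) • (gradient f x - gradient f y)‖ ^ 2 ≤ f y := by
  set e := (1 / L) • (gradient f x - gradient f y) with he
  have hg : gradient f x - gradient f y = L • e := by
    rw [he, smul_smul, mul_one_div_cancel hL.ne', one_smul]
  have h1 := aux_descent f L hdiff hs y e
  have h2 := aux_convex f hconv hdiff x (y - x + e)
  rw [show x + (y - x + e) = y + e by abel, inner_add_right] at h2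
  have h3 : ⟪gradient f x, e⟫ - ⟪gradient f y, e⟫ = L * ‖e‖ ^ 2 := by
    rw [← inner_sub_left, hg, real_inner_smul_left, real_inner_self_eq_norm_sq]
  linarith

lemma aux_firm (f : E → ℝ) (L : ℝ) (hL : 0 < L) (hconv : ConvexOn ℝ Set.univ f)
    (hdiff : Differentiable ℝ f)
    (hs : ∀ y z : E, ‖gradient f y - gradient f z‖ ≤ L * ‖y - z‖) (x y : E) :
    ‖(x - (1 / L) • gradient f x) - (y - (1 / L) • gradient f y)‖ ^ 2
      + ‖(1 / L) • (gradient f x - gradient f y)‖ ^ 2 ≤ ‖x - y‖ ^ 2 := by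
  have h1 := aux_half f L hL hconv hdiff hs x y
  have h2 := aux_half f L hL hconv hdiff hs y x
  rw [← neg_sub (gradient f x), smul_neg, norm_neg] at h2
  rw [← neg_sub x y, inner_neg_right] at h1
  set e := (1 / L) • (gradient f x - gradient f y) with he
  have hg : gradient f x - gradient f y = L • e := by
    rw [he, smul_smul, mul_one_div_cancel hL.ne', one_smul]
  have h3 : ⟪gradient f x, x - y⟫ - ⟪gradient f y, x - y⟫ = L * ⟪x - y, e⟫ := by
    rw [← inner_sub_left, hg, real_inner_smul_left, real_inner_comm]
  have h4 : ‖e‖ ^ 2 ≤ ⟪x - y, e⟫ := by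
    refine le_of_mul_le_mul_left ?_ hL
    linarith
  rw [show (x - (1 / L) • gradient f x) - (y - (1 / L) • gradient f y) = (x - y) - e by
    rw [he]; module, norm_sub_sq_real]
  linarith

end aux

/-- Convergence of the gradient norm along gradient descent (Euclidean case of
Theorem 3.7(1)): if `κ* := inf_y ‖∇f(y)‖ > 0` and `(x_i)` is the gradient-descent
sequence with step size `1/L` from any initial point, then `‖∇f(x_i)‖ → κ*`. -/
theorem gradient_descent_gradient_norm_tendsto {n : ℕ} (hn : 1 ≤ n)
    (f : EuclideanSpace ℝ (Fin n) → ℝ) (L : ℝ) (hL : 0 < L)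
    (hconv : ConvexOn ℝ Set.univ f) (hdiff : Differentiable ℝ f)
    (hsmooth : ∀ y z : EuclideanSpace ℝ (Fin n),
      ‖gradient f y - gradient f z‖ ≤ L * ‖y - z‖)
    (hκ : 0 < ⨅ y, ‖gradient f y‖)
    (x : ℕ → EuclideanSpace ℝ (Fin n))
    (hrec : ∀ i : ℕ, x (i + 1) = x i - (1 / L) • gradient f (x i)) :
    Tendsto (fun i => ‖gradient f (x i)‖) atTop (nhds (⨅ y, ‖gradient f y‖)) := by
  have hfirm := aux_firm f L hL hconv hdiff hsmooth
  have hbdd : BddBelow (Set.range fun y => ‖gradient f y‖) :=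
    ⟨0, by rintro _ ⟨y, rfl⟩; exact norm_nonneg _⟩
  rw [Metric.tendsto_atTop]
  intro ε hε
  obtain ⟨y0, hy0⟩ := exists_lt_of_ciInf_lt (lt_add_of_pos_right (⨅ y, ‖gradient f y‖) (half_pos hε))
  let T : EuclideanSpace ℝ (Fin n) → EuclideanSpace ℝ (Fin n) :=
    fun z => z - (1 / L) • gradient f z
  let y : ℕ → EuclideanSpace ℝ (Fin n) := fun i => T^[i] y0
  have hy : ∀ i, y (i + 1) = y i - (1 / L) • gradient f (y i) := fun i =>
    Function.iterate_succ_apply' T i y0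
  have hmono : ∀ i, ‖gradient f (y i)‖ ≤ ‖gradient f y0‖ := by
    intro i
    induction i with
    | zero => exact le_rfl
    | succ i ih =>
      refine le_trans ?_ ih
      have h := hfirm (y i) (y (i + 1))
      rw [← hy (i + 1), ← hy i, hy (i + 1), sub_sub_cancel,
        show y i - y (i + 1) = (1 / L) • gradient f (y i) by rw [hy i]; abel] at h
      have h2 : ‖(1 / L) • gradient f (y (i + 1))‖ ≤ ‖(1 / L) • gradient f (y i)‖ :=
        le_of_abs_le <| abs_le_of_sq_le_sq (by linarith [sq_nonneg ‖(1 / L) • (gradient f (y i) - gradient f (y (i + 1)))‖]) (norm_nonneg _)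
      rw [norm_smul, norm_smul] at h2
      exact le_of_mul_le_mul_left h2 (norm_pos_iff.2 (by positivity))
  have hsum : Summable fun i => ‖(1 / L) • (gradient f (x i) - gradient f (y i))‖ ^ 2 := by
    refine summable_of_sum_range_le (c := ‖x 0 - y 0‖ ^ 2) (fun i => sq_nonneg _) fun m => ?_
    have : ∑ i ∈ Finset.range m, ‖(1 / L) • (gradient f (x i) - gradient f (y i))‖ ^ 2
        + ‖x m - y m‖ ^ 2 ≤ ‖x 0 - y 0‖ ^ 2 := by
      induction m with
      | zero => simp
      | succ m ih =>
        have h := hfirm (x m) (y m)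
        rw [← hrec, ← hy] at h
        rw [Finset.sum_range_succ]
        linarith
    linarith [sq_nonneg ‖x m - y m‖]
  have ht := hsum.tendsto_atTop_zero
  have hev := ht.eventually_lt_const (show (0:ℝ) < (1 / L * (ε / 2)) ^ 2 by positivity)
  obtain ⟨N, hN⟩ := eventually_atTop.1 hev
  refine ⟨N, fun i hi => ?_⟩
  have h1 := lt_of_pow_lt_pow_left₀ 2 (by positivity) (hN i hi)
  rw [norm_smul, Real.norm_of_nonneg (by positivity)] at h1
  have h2 := lt_of_mul_lt_mul_left h1 (by positivity)
  have h3 := norm_sub_norm_le (gradient f (x i)) (gradient f (y i))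
  have h4 := hmono i
  have h5 := ciInf_le hbdd (x i)
  rw [Real.dist_eq, abs_of_nonneg (sub_nonneg.2 h5)]
  linarith
end

section
/- Vanishing change of consecutive gradients along gradient descent (Euclidean case of Proposition 3.9(2)): suppose κ* := inf_{y ∈ ℝⁿ} ‖∇f(y)‖ > 0 and let (x_i) be the gradient-descent sequence with step size 1/L from any initial point x₀. Then ‖∇f(x_i) − ∇f(x_{i+1})‖ converges to 0 as i → ∞. -/
open Filter
open scoped RealInnerProductSpace

section GDHelpers

variable {n : ℕ}

lemma gd_line_deriv (f : EuclideanSpace ℝ (Fin n) → ℝ) (hdiff : Differentiable ℝ f)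
    (x v : EuclideanSpace ℝ (Fin n)) (t : ℝ) :
    HasDerivAt (fun t : ℝ => f (x + t • v)) ⟪gradient f (x + t • v), v⟫ t := by
  have h1 : HasDerivAt (fun t : ℝ => x + t • v) v t := by
    simpa using ((hasDerivAt_id t).smul_const v).const_add x
  have h2 := (hdiff (x + t • v)).hasFDerivAt.comp_hasDerivAt t h1
  rw [inner_gradient_left]
  exact h2

lemma gd_convex (f : EuclideanSpace ℝ (Fin n) → ℝ) (hconv : ConvexOn ℝ Set.univ f)
    (hdiff : Differentiable ℝ f) (x v : EuclideanSpace ℝ (Fin n)) :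
    f x + ⟪gradient f x, v⟫ ≤ f (x + v) := by
  have hc : ConvexOn ℝ Set.univ (fun t : ℝ => f (x + t • v)) := by
    refine ⟨convex_univ, ?_⟩
    intro a _ b _ p q hp hq hpq
    have := hconv.2 (Set.mem_univ (x + a • v)) (Set.mem_univ (x + b • v)) hp hq hpq
    have e : x + (p • a + q • b) • v = p • (x + a • v) + q • (x + b • v) := by
      have : x = (p + q) • x := by rw [hpq, one_smul]
      nth_rewrite 1 [this]
      simp only [smul_eq_mul]
      module
    simp only [e]
    exact this
  have h := hc.le_slope_of_hasDerivAt (Set.mem_univ 0) (Set.mem_univ 1) one_pos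
    (gd_line_deriv f hdiff x v 0)
  simp [slope_def_field] at h
  rw [inner_gradient_left]
  linarith

lemma gd_descent (f : EuclideanSpace ℝ (Fin n) → ℝ) (L : ℝ)
    (hdiff : Differentiable ℝ f)
    (hsmooth : ∀ y z : EuclideanSpace ℝ (Fin n),
      ‖gradient f y - gradient f z‖ ≤ L * ‖y - z‖)
    (x v : EuclideanSpace ℝ (Fin n)) :
    f (x + v) ≤ f x + ⟪gradient f x, v⟫ + L / 2 * ‖v‖ ^ 2 := by
  let h : ℝ → ℝ := fun t => f (x + t • v) - t * ⟪gradient f x, v⟫ - t ^ 2 * (L / 2 * ‖v‖ ^ 2)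
  have hd : ∀ t, HasDerivAt h (⟪gradient f (x + t • v), v⟫ - ⟪gradient f x, v⟫
      - 2 * t * (L / 2 * ‖v‖ ^ 2)) t := by
    intro t
    have h1 := (hasDerivAt_id t).mul_const ⟪gradient f x, v⟫
    have h2 := (hasDerivAt_pow 2 t).mul_const (L / 2 * ‖v‖ ^ 2)
    have h3 := ((gd_line_deriv f hdiff x v t).sub h1).sub h2
    refine h3.congr_deriv ?_
    simp
  have ha : AntitoneOn h (Set.Ici 0) := by
    refine antitoneOn_of_deriv_nonpos (convex_Ici 0)
      (fun t _ => (hd t).continuousAt.continuousWithinAt)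
      (fun t _ => (hd t).differentiableAt.differentiableWithinAt) ?_
    intro t ht
    simp only [interior_Ici, Set.mem_Ioi] at ht
    rw [(hd t).deriv, ← inner_sub_left]
    have h1 := real_inner_le_norm (gradient f (x + t • v) - gradient f x) v
    have h2 := hsmooth (x + t • v) x
    rw [add_sub_cancel_left, norm_smul, Real.norm_eq_abs, abs_of_pos ht] at h2
    have h3 := mul_le_mul_of_nonneg_right h2 (norm_nonneg v)
    nlinarith
  have := ha (Set.mem_Ici.2 le_rfl) (Set.mem_Ici.2 zero_le_one) zero_le_one
  simp [h] at this
  rw [inner_gradient_left]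
  linarith

lemma gd_half (f : EuclideanSpace ℝ (Fin n) → ℝ) (L : ℝ) (hL : 0 < L)
    (hconv : ConvexOn ℝ Set.univ f) (hdiff : Differentiable ℝ f)
    (hsmooth : ∀ y z : EuclideanSpace ℝ (Fin n),
      ‖gradient f y - gradient f z‖ ≤ L * ‖y - z‖)
    (x y : EuclideanSpace ℝ (Fin n)) :
    f x - f y ≤ ⟪gradient f x, x - y⟫ - 1 / (2 * L) * ‖gradient f x - gradient f y‖ ^ 2 := by
  set d := gradient f x - gradient f y with hd
  have h1 := gd_descent f L hdiff hsmooth y ((1 / L) • d)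
  have h2 := gd_convex f hconv hdiff x (y + (1 / L) • d - x)
  rw [add_sub_cancel] at h2
  have h3 : ⟪gradient f x, y + (1 / L) • d - x⟫
      = - ⟪gradient f x, x - y⟫ + 1 / L * ⟪gradient f x, d⟫ := by
    rw [← real_inner_smul_right, ← inner_neg_right, ← inner_add_right]
    · congr 1
      module
  have h4 : ⟪gradient f x, d⟫ - ⟪gradient f y, d⟫ = ‖d‖ ^ 2 := by
    rw [← inner_sub_left, ← hd, real_inner_self_eq_norm_sq]
  rw [norm_smul, mul_pow, Real.norm_eq_abs, sq_abs, real_inner_smul_right] at h1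
  rw [h3] at h2
  have h5 : L / 2 * ((1 / L) ^ 2 * ‖d‖ ^ 2) = 1 / (2 * L) * ‖d‖ ^ 2 := by
    field_simp
  have h6 : 1 / L * ‖d‖ ^ 2 = 2 * (1 / (2 * L) * ‖d‖ ^ 2) := by
    field_simp
  have h7 : 1 / L * ⟪gradient f x, d⟫ - 1 / L * ⟪gradient f y, d⟫ = 1 / L * ‖d‖ ^ 2 := by
    rw [← mul_sub, h4]
  linarith

end GDHelpers

/-- Vanishing change of consecutive gradients along gradient descent (Euclidean case
of Proposition 3.9(2)): if `κ* := inf_y ‖∇f(y)‖ > 0` and `(x_i)` is the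
gradient-descent sequence with step size `1/L`, then
`‖∇f(x_i) - ∇f(x_{i+1})‖ → 0`. -/
theorem gradient_descent_gradient_change_vanishes {n : ℕ} (hn : 1 ≤ n)
    (f : EuclideanSpace ℝ (Fin n) → ℝ) (L : ℝ) (hL : 0 < L)
    (hconv : ConvexOn ℝ Set.univ f) (hdiff : Differentiable ℝ f)
    (hsmooth : ∀ y z : EuclideanSpace ℝ (Fin n),
      ‖gradient f y - gradient f z‖ ≤ L * ‖y - z‖)
    (hκ : 0 < ⨅ y, ‖gradient f y‖)
    (x : ℕ → EuclideanSpace ℝ (Fin n))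
    (hrec : ∀ i : ℕ, x (i + 1) = x i - (1 / L) • gradient f (x i)) :
    Tendsto (fun i => ‖gradient f (x i) - gradient f (x (i + 1))‖) atTop
      (nhds 0) := by
  have key : ∀ i, ‖gradient f (x i) - gradient f (x (i + 1))‖ ^ 2 ≤
      ‖gradient f (x i)‖ ^ 2 - ‖gradient f (x (i + 1))‖ ^ 2 := by
    intro i
    have h1 := gd_half f L hL hconv hdiff hsmooth (x i) (x (i + 1))
    have h2 := gd_half f L hL hconv hdiff hsmooth (x (i + 1)) (x i)
    rw [norm_sub_rev] at h2
    have e : x i - x (i + 1) = (1 / L) • gradient f (x i) := by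
      rw [hrec i]; abel
    have e' : x (i + 1) - x i = -((1 / L) • gradient f (x i)) := by
      rw [hrec i]; abel
    rw [e, real_inner_smul_right, real_inner_self_eq_norm_sq] at h1
    rw [e', inner_neg_right, real_inner_smul_right, real_inner_comm] at h2
    have h3 := norm_sub_sq_real (gradient f (x i)) (gradient f (x (i + 1)))
    set A := ‖gradient f (x i) - gradient f (x (i + 1))‖ ^ 2
    set B := ‖gradient f (x i)‖ ^ 2
    set C := ‖gradient f (x (i + 1))‖ ^ 2
    set I := ⟪gradient f (x i), gradient f (x (i + 1))⟫
    have h6 : 1 / L * A = 2 * (1 / (2 * L) * A) := by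
      field_simp
    have h7 : 0 ≤ (1 / L) * (B - I - A) := by linarith
    have h8 : 0 ≤ B - I - A := by
      have : 0 < 1 / L := by positivity
      exact nonneg_of_mul_nonneg_right h7 this
    linarith
  have hanti : Antitone (fun i => ‖gradient f (x i)‖ ^ 2) := by
    refine antitone_nat_of_succ_le fun i => ?_
    have := key i
    have := sq_nonneg ‖gradient f (x i) - gradient f (x (i + 1))‖
    linarith
  have hlim := tendsto_atTop_ciInf hanti ⟨0, by rintro _ ⟨i, rfl⟩; positivity⟩
  have hdiff0 := hlim.sub (hlim.comp (tendsto_add_atTop_nat 1))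
  rw [sub_self] at hdiff0
  have hsq : Tendsto (fun i => ‖gradient f (x i) - gradient f (x (i + 1))‖ ^ 2) atTop
      (nhds 0) :=
    squeeze_zero (fun i => sq_nonneg _) key hdiff0
  have := hsq.sqrt
  simpa [Real.sqrt_sq] using this
end

section
/- Velocity of escape of gradient descent (Euclidean case of Proposition 3.9(3)): suppose κ* := inf_{y ∈ ℝⁿ} ‖∇f(y)‖ > 0 and let (x_i) be the gradient-descent sequence with step size 1/L from any initial point x₀. Then ‖x_i − x₀‖ / i converges to κ*/L as i → ∞. -/
open Filter
open scoped RealInnerProductSpace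

section helpers
variable {E : Type*} [NormedAddCommGroup E] [InnerProductSpace ℝ E] [CompleteSpace E]

lemma line_hasDerivAt (f : E → ℝ) (hdiff : Differentiable ℝ f) (y d : E) (t : ℝ) :
    HasDerivAt (fun t : ℝ => f (y + t • d)) ⟪gradient f (y + t • d), d⟫ t := by
  have h1 : HasFDerivAt f (InnerProductSpace.toDual ℝ E (gradient f (y + t • d))) (y + t • d) :=
    (hdiff _).hasGradientAt.hasFDerivAt
  have h2 : HasDerivAt (fun t : ℝ => y + t • d) d t := by
    simpa using ((hasDerivAt_id t).smul_const d).const_add y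
  have h3 := h1.comp_hasDerivAt t h2
  rw [InnerProductSpace.toDual_apply_apply] at h3
  exact h3

lemma grad_ineq (f : E → ℝ) (hconv : ConvexOn ℝ Set.univ f) (hdiff : Differentiable ℝ f)
    (y z : E) : f y + ⟪gradient f y, z - y⟫ ≤ f z := by
  have hc : ConvexOn ℝ Set.univ (fun t : ℝ => f (y + t • (z - y))) := by
    refine ⟨convex_univ, ?_⟩
    intro s _ t _ a b ha hb hab
    have h := hconv.2 (Set.mem_univ (y + s • (z - y))) (Set.mem_univ (y + t • (z - y))) ha hb hab
    have e : a • (y + s • (z - y)) + b • (y + t • (z - y))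
        = y + (a • s + b • t) • (z - y) := by
      have : y = (a + b) • y := by rw [hab, one_smul]
      simp only [smul_eq_mul]
      nth_rewrite 5 [this]
      module
    rw [e] at h
    exact h
  have hd := line_hasDerivAt f hdiff y (z - y) 0
  have h := hc.le_slope_of_hasDerivAt (Set.mem_univ 0) (Set.mem_univ 1) one_pos hd
  have e0 : y + (0 : ℝ) • (z - y) = y := by simp
  have e1 : y + (1 : ℝ) • (z - y) = z := by simp
  rw [slope_def_field, e0, e1, sub_zero, div_one] at h
  linarith

lemma descent (f : E → ℝ) (L : ℝ) (hdiff : Differentiable ℝ f)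
    (hs : ∀ y z : E, ‖gradient f y - gradient f z‖ ≤ L * ‖y - z‖) (y d : E) :
    f (y + d) ≤ f y + ⟪gradient f y, d⟫ + L / 2 * ‖d‖ ^ 2 := by
  let ψ : ℝ → ℝ := fun t => f (y + t • d) - t * ⟪gradient f y, d⟫ - L / 2 * ‖d‖ ^ 2 * t ^ 2
  have hd : ∀ t, HasDerivAt ψ
      (⟪gradient f (y + t • d), d⟫ - ⟪gradient f y, d⟫ - L * ‖d‖ ^ 2 * t) t := by
    intro t
    have h := ((line_hasDerivAt f hdiff y d t).sub
      ((hasDerivAt_id t).mul_const ⟪gradient f y, d⟫)).sub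
      ((hasDerivAt_pow 2 t).const_mul (L / 2 * ‖d‖ ^ 2))
    refine HasDerivAt.congr_deriv (f := ψ) h ?_
    norm_num
    ring
  have ha : AntitoneOn ψ (Set.Icc 0 1) := by
    refine antitoneOn_of_deriv_nonpos (convex_Icc 0 1)
      (fun t _ => (hd t).continuousAt.continuousWithinAt)
      (fun t _ => (hd t).differentiableAt.differentiableWithinAt) ?_
    intro t ht
    rw [interior_Icc] at ht
    rw [(hd t).deriv, ← inner_sub_left]
    have h1 := real_inner_le_norm (gradient f (y + t • d) - gradient f y) d
    have h2 := hs (y + t • d) y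
    rw [add_sub_cancel_left, norm_smul, Real.norm_of_nonneg ht.1.le] at h2
    have h3 := mul_le_mul_of_nonneg_right h2 (norm_nonneg d)
    nlinarith
  have h := ha (by simp : (0:ℝ) ∈ Set.Icc (0:ℝ) 1) (by simp : (1:ℝ) ∈ Set.Icc (0:ℝ) 1) zero_le_one
  have e0 : y + (0 : ℝ) • d = y := by simp
  have e1 : y + (1 : ℝ) • d = y + d := by simp
  simp only [ψ, e0, e1] at h
  linarith

lemma cocoercive (f : E → ℝ) (L : ℝ) (hL : 0 < L) (hconv : ConvexOn ℝ Set.univ f)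
    (hdiff : Differentiable ℝ f)
    (hs : ∀ y z : E, ‖gradient f y - gradient f z‖ ≤ L * ‖y - z‖) (x y : E) :
    f x + ⟪gradient f x, y - x⟫ + 1 / (2 * L) * ‖gradient f y - gradient f x‖ ^ 2 ≤ f y := by
  set w := gradient f y - gradient f x with hw
  have h1 := descent f L hdiff hs y (-(1 / L) • w)
  have h2 := grad_ineq f hconv hdiff x (y + -(1 / L) • w)
  have e : y + -(1 / L) • w - x = (y - x) + -(1 / L) • w := by abel
  rw [e, inner_add_right, inner_smul_right] at h2
  rw [inner_smul_right, norm_smul, mul_pow] at h1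
  have h3 : ⟪gradient f y, w⟫ - ⟪gradient f x, w⟫ = ‖w‖ ^ 2 := by
    rw [← inner_sub_left, ← hw, real_inner_self_eq_norm_sq]
  have h4 : L / 2 * (‖-(1 / L)‖ ^ 2 * ‖w‖ ^ 2) = 1 / (2 * L) * ‖w‖ ^ 2 := by
    rw [Real.norm_eq_abs, sq_abs]; field_simp
  have h5 : 1 / L * ⟪gradient f y, w⟫ - 1 / L * ⟪gradient f x, w⟫
      = 2 * (1 / (2 * L) * ‖w‖ ^ 2) := by
    rw [← mul_sub, h3]; field_simp
  linarith

lemma nonexp (f : E → ℝ) (L : ℝ) (hL : 0 < L) (hconv : ConvexOn ℝ Set.univ f)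
    (hdiff : Differentiable ℝ f)
    (hs : ∀ y z : E, ‖gradient f y - gradient f z‖ ≤ L * ‖y - z‖) (x y : E) :
    ‖(x - (1 / L) • gradient f x) - (y - (1 / L) • gradient f y)‖ ≤ ‖x - y‖ := by
  have h1 := cocoercive f L hL hconv hdiff hs x y
  have h2 := cocoercive f L hL hconv hdiff hs y x
  rw [norm_sub_rev, ← neg_sub x y, inner_neg_right] at h1
  have h3 : 1 / L * ‖gradient f x - gradient f y‖ ^ 2
      ≤ ⟪x - y, gradient f x - gradient f y⟫ := by
    rw [real_inner_comm, inner_sub_left]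
    have : 1 / L * ‖gradient f x - gradient f y‖ ^ 2
      = 2 * (1 / (2 * L) * ‖gradient f x - gradient f y‖ ^ 2) := by field_simp
    linarith
  have e : (x - (1 / L) • gradient f x) - (y - (1 / L) • gradient f y)
      = (x - y) - (1 / L) • (gradient f x - gradient f y) := by module
  rw [e]
  refine le_of_sq_le_sq ?_ (norm_nonneg _)
  rw [norm_sub_sq_real, inner_smul_right, norm_smul, Real.norm_of_nonneg (by positivity), mul_pow]
  have h4 := mul_le_mul_of_nonneg_left h3 (by positivity : 0 ≤ 1 / L)
  have h5 : 0 ≤ (1 / L) ^ 2 * ‖gradient f x - gradient f y‖ ^ 2 := by positivity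
  nlinarith

lemma upper (f : E → ℝ) (L : ℝ) (hL : 0 < L) (hconv : ConvexOn ℝ Set.univ f)
    (hdiff : Differentiable ℝ f)
    (hs : ∀ y z : E, ‖gradient f y - gradient f z‖ ≤ L * ‖y - z‖) (x : ℕ → E)
    (hrec : ∀ i : ℕ, x (i + 1) = x i - (1 / L) • gradient f (x i)) (y : E) (i : ℕ) :
    ‖x i - y‖ ≤ ‖x 0 - y‖ + i * (‖gradient f y‖ / L) := by
  -- induct along the orbit shifted by one step of `y`
  induction i with
  | zero => simp
  | succ i ih =>
    have h := nonexp f L hL hconv hdiff hs (x i) y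
    rw [← hrec] at h
    have e : x (i + 1) - y = (x (i + 1) - (y - (1 / L) • gradient f y))
      - (1 / L) • gradient f y := by abel
    have h2 := norm_sub_le (x (i + 1) - (y - (1 / L) • gradient f y)) ((1 / L) • gradient f y)
    rw [← e, norm_smul, Real.norm_of_nonneg (by positivity : 0 ≤ 1 / L)] at h2
    push_cast
    have : 1 / L * ‖gradient f y‖ = ‖gradient f y‖ / L := by ring
    linarith

lemma fdecr (f : E → ℝ) (L : ℝ) (hL : 0 < L) (hconv : ConvexOn ℝ Set.univ f)
    (hdiff : Differentiable ℝ f)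
    (hs : ∀ y z : E, ‖gradient f y - gradient f z‖ ≤ L * ‖y - z‖) (x : ℕ → E)
    (hrec : ∀ i : ℕ, x (i + 1) = x i - (1 / L) • gradient f (x i)) (κ : ℝ) (hκ : 0 ≤ κ)
    (hk : ∀ y, κ ≤ ‖gradient f y‖) (i : ℕ) :
    f (x i) ≤ f (x 0) - i * (κ ^ 2 / L) := by
  induction i with
  | zero => simp
  | succ i ih =>
    have h := cocoercive f L hL hconv hdiff hs (x (i + 1)) (x i)
    have e : x i - x (i + 1) = (1 / L) • gradient f (x i) := by rw [hrec i]; abel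
    rw [e, inner_smul_right, norm_sub_sq_real, real_inner_comm] at h
    have a1 := pow_le_pow_left₀ hκ (hk (x i)) 2
    have a2 := pow_le_pow_left₀ hκ (hk (x (i + 1))) 2
    have h3 : κ ^ 2 / L ≤ 1 / (2 * L) *
        (‖gradient f (x i)‖ ^ 2 + ‖gradient f (x (i + 1))‖ ^ 2) := by
      have := mul_le_mul_of_nonneg_left (add_le_add a1 a2) (by positivity : 0 ≤ 1 / (2 * L))
      have e2 : 1 / (2 * L) * (κ ^ 2 + κ ^ 2) = κ ^ 2 / L := by field_simp; ring
      linarith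
    have e3 : (1 : ℝ) / L = 2 * (1 / (2 * L)) := by field_simp
    rw [e3] at h
    push_cast
    linarith

end helpers

/-- Velocity of escape of gradient descent (Euclidean case of Proposition 3.9(3)):
if `κ* := inf_y ‖∇f(y)‖ > 0` and `(x_i)` is the gradient-descent sequence with step
size `1/L`, then `‖x_i - x₀‖ / i → κ*/L`. -/
theorem gradient_descent_velocity_of_escape {n : ℕ} (hn : 1 ≤ n)
    (f : EuclideanSpace ℝ (Fin n) → ℝ) (L : ℝ) (hL : 0 < L)
    (hconv : ConvexOn ℝ Set.univ f) (hdiff : Differentiable ℝ f)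
    (hsmooth : ∀ y z : EuclideanSpace ℝ (Fin n),
      ‖gradient f y - gradient f z‖ ≤ L * ‖y - z‖)
    (hκ : 0 < ⨅ y, ‖gradient f y‖)
    (x : ℕ → EuclideanSpace ℝ (Fin n))
    (hrec : ∀ i : ℕ, x (i + 1) = x i - (1 / L) • gradient f (x i)) :
    Tendsto (fun i : ℕ => ‖x i - x 0‖ / (i : ℝ)) atTop
      (nhds ((⨅ y, ‖gradient f y‖) / L)) := by

  set κ := ⨅ y, ‖gradient f y‖ with hκdef
  have hk : ∀ y, κ ≤ ‖gradient f y‖ := fun y =>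
    ciInf_le ⟨0, by rintro _ ⟨z, rfl⟩; exact norm_nonneg _⟩ y
  have hinv : Tendsto (fun i : ℕ => (1 : ℝ) / (i : ℝ)) atTop (nhds 0) :=
    tendsto_one_div_atTop_nhds_zero_nat
  refine tendsto_order.2 ⟨fun a ha => ?_, fun b hb => ?_⟩
  · obtain ⟨y, hy⟩ : ∃ y, a < κ ^ 2 / L / ‖gradient f y‖ := by
      rcases le_or_gt a 0 with h0 | h0
      · refine ⟨0, lt_of_le_of_lt h0 ?_⟩
        have := hκ.trans_le (hk 0)
        positivity
      · have : κ < κ ^ 2 / L / a := by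
          rw [lt_div_iff₀ hL] at ha
          rw [lt_div_iff₀ h0, lt_div_iff₀ hL]
          nlinarith
        obtain ⟨y, hy⟩ := exists_lt_of_ciInf_lt this
        refine ⟨y, ?_⟩
        have hG := hκ.trans_le (hk y)
        rw [lt_div_iff₀ h0] at hy
        rw [lt_div_iff₀ hG]
        linarith
    have hG := hκ.trans_le (hk y)
    set G := ‖gradient f y‖ with hGdef
    set C := (f y - f (x 0)) / G - ‖x 0 - y‖ with hC
    have hlim : Tendsto (fun i : ℕ => κ ^ 2 / L / G + C * (1 / (i : ℝ))) atTop
        (nhds (κ ^ 2 / L / G)) := by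
      simpa using (hinv.const_mul C).const_add (κ ^ 2 / L / G)
    filter_upwards [hlim.eventually (lt_mem_nhds hy), eventually_gt_atTop 0] with i hi hi0
    refine lt_of_lt_of_le hi ?_
    have hi0' : (0 : ℝ) < i := by exact_mod_cast hi0
    rw [le_div_iff₀ hi0']
    have h1 := fdecr f L hL hconv hdiff hsmooth x hrec κ hκ.le hk i
    have h2 := grad_ineq f hconv hdiff y (x i)
    have h3 := (abs_le.1 (abs_real_inner_le_norm (gradient f y) (x i - y))).1
    have h4 : ‖x i - y‖ ≤ ‖x i - x 0‖ + ‖x 0 - y‖ := norm_sub_le_norm_sub_add_norm_sub _ _ _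
    rw [← hGdef] at h3
    have h5 : (i * (κ ^ 2 / L) + (f y - f (x 0))) / G ≤ ‖x i - y‖ := by
      rw [div_le_iff₀ hG]; linarith
    have e : (κ ^ 2 / L / G + C * (1 / (i : ℝ))) * i
        = (i * (κ ^ 2 / L) + (f y - f (x 0))) / G - ‖x 0 - y‖ := by
      rw [add_mul, mul_assoc, one_div_mul_cancel hi0'.ne', hC]; ring
    linarith
  · obtain ⟨y, hy⟩ := exists_lt_of_ciInf_lt ((div_lt_iff₀ hL).1 hb)
    rw [← div_lt_iff₀ hL] at hy
    have hlim : Tendsto (fun i : ℕ => ‖gradient f y‖ / L + 2 * ‖x 0 - y‖ * (1 / (i : ℝ))) atTop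
        (nhds (‖gradient f y‖ / L)) := by
      simpa using (hinv.const_mul (2 * ‖x 0 - y‖)).const_add (‖gradient f y‖ / L)
    filter_upwards [hlim.eventually (gt_mem_nhds hy), eventually_gt_atTop 0] with i hi hi0
    refine lt_of_le_of_lt ?_ hi
    have hi0' : (0 : ℝ) < i := by exact_mod_cast hi0
    rw [div_le_iff₀ hi0', add_mul, mul_assoc, one_div_mul_cancel hi0'.ne']
    have h1 := upper f L hL hconv hdiff hsmooth x hrec y i
    have h4 : ‖x i - x 0‖ ≤ ‖x i - y‖ + ‖y - x 0‖ := norm_sub_le_norm_sub_add_norm_sub _ _ _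
    rw [norm_sub_rev y] at h4
    linarith
end
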